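/- Let M be a finitely generated abelian group such that every semisimple ℤ-module (equivalently every ℤ/pℤ for every prime p) is in the subprojectivity domain of M. Then M is free (projective). -/

import Mathlib

/-!
Over a principal ideal domain, a homomorphism that factors through a free module kills torsion.
For a prime `p` the quotient `M ⧸ pM` is killed by `p`, hence semisimple, so the projection
`M → M ⧸ pM` lifts to a free cover of `M ⧸ pM`; therefore the torsion submodule `T` of `M` lies in
`pM`, and even `T = pT` because `px` torsion implies `x` torsion (`exists_prime_smul_eq`).
Iterating over prime factors, `T = aT` for every nonzero scalar `a` (`exists_smul_eq`). If `M` is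
finitely generated, so is `T`, and some nonzero `a` annihilates it; so `T = 0`, and a finitely
generated torsion-free module is free (`free_of_subprojective`). The case of `ℤ` is the theorem.
Working over a general ring avoids having two `ℤ`-module structures on the quotients of `M`.
-/

/-- `M` is `N`-subprojective: every homomorphism `M → N` lifts through every
epimorphism onto `N`. -/
def Subprojective (R : Type) [Ring R] (M N : Type) [AddCommGroup M] [Module R M]
    [AddCommGroup N] [Module R N] : Prop :=
  ∀ (B : Type) [AddCommGroup B] [Module R B] (g : B →ₗ[R] N),
    Function.Surjective g → ∀ f : M →ₗ[R] N, ∃ h : M →ₗ[R] B, g ∘ₗ h = f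

/-- The torsion submodule is divisible by every prime. -/
theorem exists_prime_smul_eq (R : Type) [CommRing R] [IsDomain R] [IsPrincipalIdealRing R]
    (M : Type) [AddCommGroup M] [Module R M]
    (h : ∀ (N : Type) (_ : AddCommGroup N) (_ : Module R N),
      IsSemisimpleModule R N → Subprojective R M N)
    (p : R) (hp : Prime p) (x : M) (hx : x ∈ Submodule.torsion R M) :
    ∃ y ∈ Submodule.torsion R M, x = p • y := by
  let P : Submodule R M := LinearMap.range (LinearMap.lsmul R M p)
  -- All of `M ⧸ P` is `p`-torsion; writing it as a `torsionBy` submodule makes the library's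
  -- semisimplicity result applicable.
  let N := Submodule.torsionBy R (M ⧸ P) p
  have hss : IsSemisimpleModule R N :=
    Submodule.isSemisimple_torsionBy_of_irreducible hp.irreducible
  let f : M →ₗ[R] N := P.mkQ.codRestrict N (fun m => by
    rw [Submodule.mem_torsionBy_iff, ← map_smul]
    exact (Submodule.Quotient.mk_eq_zero P).2 ⟨m, rfl⟩)
  obtain ⟨k, hk⟩ := h N inferInstance inferInstance hss (N →₀ R)
    (Finsupp.linearCombination R (id : N → N)) (Finsupp.linearCombination_id_surjective R N) f
  obtain ⟨a, ha⟩ := (Submodule.mem_torsion_iff x).1 hx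
  have ha0 : (a : R) ≠ 0 := nonZeroDivisors.coe_ne_zero a
  have hkx : k x = 0 := by
    have h1 : (a : R) • k x = 0 := by
      rw [← map_smul]
      exact (congrArg k ha).trans (map_zero k)
    exact (smul_eq_zero.1 h1).resolve_left ha0
  have hfx : f x = 0 := by rw [← hk, LinearMap.comp_apply, hkx, map_zero]
  have hxP : x ∈ P := (Submodule.Quotient.mk_eq_zero P).1 (congrArg Subtype.val hfx)
  obtain ⟨y, hy⟩ := hxP
  have hy' : p • y = x := hy
  refine ⟨y, (Submodule.mem_torsion_iff y).2
    ⟨a * ⟨p, mem_nonZeroDivisors_of_ne_zero hp.ne_zero⟩, ?_⟩, hy'.symm⟩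
  change ((a : R) * p) • y = 0
  rw [mul_smul, hy']
  exact ha

/-- The torsion submodule is divisible by every nonzero scalar. -/
theorem exists_smul_eq (R : Type) [CommRing R] [IsDomain R] [IsPrincipalIdealRing R]
    (M : Type) [AddCommGroup M] [Module R M]
    (h : ∀ (N : Type) (_ : AddCommGroup N) (_ : Module R N),
      IsSemisimpleModule R N → Subprojective R M N)
    (a : R) (ha : a ≠ 0) :
    ∀ x ∈ Submodule.torsion R M, ∃ y ∈ Submodule.torsion R M, x = a • y := by
  induction a using UniqueFactorizationMonoid.induction_on_prime with
  | h₁ => exact absurd rfl ha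
  | h₂ u hu =>
    intro x hx
    obtain ⟨v, hv⟩ := hu.exists_right_inv
    exact ⟨v • x, Submodule.smul_mem _ _ hx, by rw [smul_smul, hv, one_smul]⟩
  | h₃ b p hb hp ih =>
    intro x hx
    obtain ⟨y, hy, rfl⟩ := exists_prime_smul_eq R M h p hp x hx
    obtain ⟨z, hz, rfl⟩ := ih hb y hy
    exact ⟨z, hz, by rw [smul_smul]⟩

/-- The argument works over any principal ideal domain. -/
theorem free_of_subprojective (R : Type) [CommRing R] [IsDomain R] [IsPrincipalIdealRing R]
    (M : Type) [AddCommGroup M] [Module R M] [Module.Finite R M]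
    (h : ∀ (N : Type) (_ : AddCommGroup N) (_ : Module R N),
      IsSemisimpleModule R N → Subprojective R M N) :
    Module.Free R M := by
  have htor : Submodule.torsion R M = ⊥ := by
    obtain ⟨a, haT, ha0⟩ := Submodule.annihilator_top_inter_nonZeroDivisors
      (Submodule.torsion_isTorsion (R := R) (M := M))
    rw [Submodule.eq_bot_iff]
    intro x hx
    obtain ⟨y, hy, rfl⟩ := exists_smul_eq R M h a (nonZeroDivisors.ne_zero ha0) x hx
    exact congrArg Subtype.val
      (Submodule.mem_annihilator.1 haT (⟨y, hy⟩ : Submodule.torsion R M) trivial)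
  have : Module.IsTorsionFree R M := Submodule.isTorsionFree_iff_torsion_eq_bot.2 htor
  infer_instance

theorem stmt_19 (M : Type) [AddCommGroup M] [Module ℤ M] [Module.Finite ℤ M]
    (h : ∀ (N : Type) (_ : AddCommGroup N) (_ : Module ℤ N),
      IsSemisimpleModule ℤ N → Subprojective ℤ M N) :
    Module.Free ℤ M := by
  exact free_of_subprojective ℤ M h
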